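/- Let φ(x) be a formula of the correspondence language with at most the free variable x. Then φ(x) is logically equivalent to the (2,1)-standard x-translation ST_21(I,x) of some modal intuitionistic formula I if and only if there exists k ∈ ℕ such that φ(x) is invariant with respect to (2,1)-modal k-asimulations. -/

import Mathlib

namespace ModalIntAsim

/-- Binary relation symbols of the correspondence vocabulary: R, R_□, R_◇. -/
inductive RelSym : Type
  | r | box | diam
deriving DecidableEq

/-- Formulas of the correspondence language: classical first-order logic without
identity, with variables indexed by `ℕ`, unary predicate letters `P n` (n : ℕ),
and the three binary relation symbols. -/
inductive FOForm : Type
  | falsum : FOForm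
  | pred : ℕ → ℕ → FOForm            -- `pred n v` is `P_n(x_v)`
  | rel : RelSym → ℕ → ℕ → FOForm    -- `rel s v w` is `S(x_v, x_w)`
  | conj : FOForm → FOForm → FOForm
  | disj : FOForm → FOForm → FOForm
  | impl : FOForm → FOForm → FOForm
  | all : ℕ → FOForm → FOForm
  | ex : ℕ → FOForm → FOForm

namespace FOForm

/-- Free variables of a correspondence formula. -/
def freeVars : FOForm → Finset ℕ
  | falsum => ∅
  | pred _ v => {v}
  | rel _ v w => {v, w}
  | conj f g => f.freeVars ∪ g.freeVars
  | disj f g => f.freeVars ∪ g.freeVars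
  | impl f g => f.freeVars ∪ g.freeVars
  | all v f => f.freeVars \ {v}
  | ex v f => f.freeVars \ {v}

/-- The unary predicate letters occurring in a formula (the binary relation
symbols R, R_□, R_◇ are regarded as belonging to every vocabulary Σ_φ). -/
def predLetters : FOForm → Finset ℕ
  | falsum => ∅
  | pred n _ => {n}
  | rel _ _ _ => ∅
  | conj f g => f.predLetters ∪ g.predLetters
  | disj f g => f.predLetters ∪ g.predLetters
  | impl f g => f.predLetters ∪ g.predLetters
  | all _ f => f.predLetters
  | ex _ f => f.predLetters

/-- Degree of a formula: the greatest number of nested quantifiers. -/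
def degree : FOForm → ℕ
  | falsum => 0
  | pred _ _ => 0
  | rel _ _ _ => 0
  | conj f g => max f.degree g.degree
  | disj f g => max f.degree g.degree
  | impl f g => max f.degree g.degree
  | all _ f => f.degree + 1
  | ex _ f => f.degree + 1

end FOForm

/-- A model of the correspondence language: a domain together with
interpretations of R, R_□, R_◇ and of the unary predicate letters.
(A Θ-model only consults the letters in Θ.) -/
structure Model : Type 1 where
  U : Type
  rel : U → U → Prop
  relBox : U → U → Prop
  relDiam : U → U → Prop
  pred : ℕ → U → Prop

/-- Interpretation of a binary relation symbol in a model. -/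
def Model.relOf (M : Model) : RelSym → M.U → M.U → Prop
  | .r => M.rel
  | .box => M.relBox
  | .diam => M.relDiam

/-- Tarskian satisfaction of a formula in a model under an assignment. -/
def Sat (M : Model) : FOForm → (ℕ → M.U) → Prop
  | .falsum, _ => False
  | .pred n v, α => M.pred n (α v)
  | .rel s v w, α => M.relOf s (α v) (α w)
  | .conj f g, α => Sat M f α ∧ Sat M g α
  | .disj f g, α => Sat M f α ∨ Sat M g α
  | .impl f g, α => Sat M f α → Sat M g α
  | .all v f, α => ∀ u : M.U, Sat M f (Function.update α v u)
  | .ex v f, α => ∃ u : M.U, Sat M f (Function.update α v u)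

/-- `M, a ⊨ φ(x)`: φ is true in `M` under any assignment sending `x` to `a`. -/
def SatAt (M : Model) (a : M.U) (x : ℕ) (φ : FOForm) : Prop :=
  ∀ α : ℕ → M.U, α x = a → Sat M φ α

/-- Logical equivalence of correspondence formulas. -/
def Equiv (φ ψ : FOForm) : Prop :=
  ∀ (M : Model) (α : ℕ → M.U), Sat M φ α ↔ Sat M ψ α

/-- Logical entailment between correspondence formulas. -/
def Entails (φ ψ : FOForm) : Prop :=
  ∀ (M : Model) (α : ℕ → M.U), Sat M φ α → Sat M ψ α

/-- Modal intuitionistic formulas: built from propositional letters `p n`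
using ⊥, ∧, ∨, →, □, ◇. -/
inductive MForm : Type
  | bot : MForm
  | prop : ℕ → MForm
  | conj : MForm → MForm → MForm
  | disj : MForm → MForm → MForm
  | impl : MForm → MForm → MForm
  | box : MForm → MForm
  | diam : MForm → MForm

/-- The (i,j)-standard x-translation `ST_ij`.  `boxOne = true` means the box
clause (□₁) is used (i = 1), `boxOne = false` means (□₂) (i = 2); likewise
`diamOne = true` means the diamond clause (◇₁) (j = 1) and `diamOne = false`
means (◇₂) (j = 2).  Bound variables are chosen fresh as `x+1`, `x+2`. -/
def ST (boxOne diamOne : Bool) : MForm → ℕ → FOForm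
  | .bot, _ => .falsum
  | .prop n, x => .pred n x
  | .conj I J, x => .conj (ST boxOne diamOne I x) (ST boxOne diamOne J x)
  | .disj I J, x => .disj (ST boxOne diamOne I x) (ST boxOne diamOne J x)
  | .impl I J, x =>
      .all (x + 1) (.impl (.rel .r x (x + 1))
        (.impl (ST boxOne diamOne I (x + 1)) (ST boxOne diamOne J (x + 1))))
  | .box I, x =>
      if boxOne then
        .all (x + 1) (.impl (.rel .box x (x + 1)) (ST boxOne diamOne I (x + 1)))
      else
        .all (x + 1) (.impl (.rel .r x (x + 1))
          (.all (x + 2) (.impl (.rel .box (x + 1) (x + 2)) (ST boxOne diamOne I (x + 2)))))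
  | .diam I, x =>
      if diamOne then
        .ex (x + 1) (.conj (.rel .diam x (x + 1)) (ST boxOne diamOne I (x + 1)))
      else
        .all (x + 1) (.impl (.rel .r x (x + 1))
          (.ex (x + 2) (.conj (.rel .diam (x + 1) (x + 2)) (ST boxOne diamOne I (x + 2)))))

/-! ### Conditions on relations between tuples (the k-asimulation conditions).
A relation between the two models is represented by its two directed
components; `N` is the model of the source tuple and `P` that of the target
tuple.  A tuple `(ā_m, a)` is represented as the list `as ++ [a]`, with
`m = as.length`. -/

section TupleConds

variable (N P : Model)

/-- The "p-type" condition: related tuples are nonempty and of equal length. -/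
def TypeCond (A : List N.U → List P.U → Prop) : Prop :=
  ∀ as bs, A as bs → as ≠ [] ∧ as.length = bs.length

/-- (p-base). -/
def BaseCond (Θ : Set ℕ) (A : List N.U → List P.U → Prop) : Prop :=
  ∀ (as : List N.U) (bs : List P.U) (a : N.U) (b : P.U),
    A (as ++ [a]) (bs ++ [b]) → ∀ n ∈ Θ, N.pred n a → P.pred n b

/-- (p-step). -/
def StepCond (k : ℕ) (A : List N.U → List P.U → Prop)
    (Arev : List P.U → List N.U → Prop) : Prop :=
  ∀ (as : List N.U) (bs : List P.U) (a : N.U) (b d : P.U),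
    A (as ++ [a]) (bs ++ [b]) → P.rel b d → as.length < k →
    ∃ c : N.U, N.rel a c ∧ A (as ++ [a, c]) (bs ++ [b, d]) ∧
      Arev (bs ++ [b, d]) (as ++ [a, c])

/-- (p-box-1). -/
def Box1Cond (k : ℕ) (A : List N.U → List P.U → Prop) : Prop :=
  ∀ (as : List N.U) (bs : List P.U) (a : N.U) (b d : P.U),
    A (as ++ [a]) (bs ++ [b]) → P.relBox b d → as.length < k →
    ∃ c : N.U, N.relBox a c ∧ A (as ++ [a, c]) (bs ++ [b, d])

/-- (p-box-2). -/
def Box2Cond (k : ℕ) (A : List N.U → List P.U → Prop) : Prop :=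
  ∀ (as : List N.U) (bs : List P.U) (a : N.U) (b d f : P.U),
    A (as ++ [a]) (bs ++ [b]) → P.rel b d → P.relBox d f → as.length + 1 < k →
    ∃ c e : N.U, N.rel a c ∧ N.relBox c e ∧ A (as ++ [a, c, e]) (bs ++ [b, d, f])

/-- (p-diam-1). -/
def Diam1Cond (k : ℕ) (A : List N.U → List P.U → Prop) : Prop :=
  ∀ (as : List N.U) (bs : List P.U) (a c : N.U) (b : P.U),
    A (as ++ [a]) (bs ++ [b]) → N.relDiam a c → as.length < k →
    ∃ d : P.U, P.relDiam b d ∧ A (as ++ [a, c]) (bs ++ [b, d])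

/-- (p-diam-2(1)). -/
def Diam2aCond (k : ℕ) (A B : List N.U → List P.U → Prop) : Prop :=
  ∀ (as : List N.U) (bs : List P.U) (a : N.U) (b d : P.U),
    A (as ++ [a]) (bs ++ [b]) → P.rel b d → as.length + 1 < k →
    ∃ c : N.U, N.rel a c ∧ B (as ++ [a, c]) (bs ++ [b, d])

/-- (p-diam-2(2)). -/
def Diam2bCond (k : ℕ) (B A : List N.U → List P.U → Prop) : Prop :=
  ∀ (as : List N.U) (bs : List P.U) (a c : N.U) (b : P.U),
    B (as ++ [a]) (bs ++ [b]) → N.relDiam a c → as.length < k →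
    ∃ d : P.U, P.relDiam b d ∧ A (as ++ [a, c]) (bs ++ [b, d])

end TupleConds

/-- An (i,1)-modal ⟨(M₁,t),(M₂,u)⟩_k-asimulation (j = 1): a single relation `A`
given by its two directed components `A12`, `A21`. -/
def IsKAsimD1 (boxOne : Bool) (Θ : Set ℕ) (M₁ M₂ : Model) (t : M₁.U) (u : M₂.U) (k : ℕ)
    (A12 : List M₁.U → List M₂.U → Prop) (A21 : List M₂.U → List M₁.U → Prop) : Prop :=
  TypeCond M₁ M₂ A12 ∧ TypeCond M₂ M₁ A21 ∧
  A12 [t] [u] ∧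
  BaseCond M₁ M₂ Θ A12 ∧ BaseCond M₂ M₁ Θ A21 ∧
  StepCond M₁ M₂ k A12 A21 ∧ StepCond M₂ M₁ k A21 A12 ∧
  (if boxOne then Box1Cond M₁ M₂ k A12 ∧ Box1Cond M₂ M₁ k A21
   else Box2Cond M₁ M₂ k A12 ∧ Box2Cond M₂ M₁ k A21) ∧
  Diam1Cond M₁ M₂ k A12 ∧ Diam1Cond M₂ M₁ k A21

/-- An (i,2)-modal ⟨(M₁,t),(M₂,u)⟩_k-asimulation (j = 2): an ordered pair
(A, B) of relations, each given by its two directed components. -/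
def IsKAsimD2 (boxOne : Bool) (Θ : Set ℕ) (M₁ M₂ : Model) (t : M₁.U) (u : M₂.U) (k : ℕ)
    (A12 : List M₁.U → List M₂.U → Prop) (A21 : List M₂.U → List M₁.U → Prop)
    (B12 : List M₁.U → List M₂.U → Prop) (B21 : List M₂.U → List M₁.U → Prop) : Prop :=
  TypeCond M₁ M₂ A12 ∧ TypeCond M₂ M₁ A21 ∧
  TypeCond M₁ M₂ B12 ∧ TypeCond M₂ M₁ B21 ∧
  A12 [t] [u] ∧
  BaseCond M₁ M₂ Θ A12 ∧ BaseCond M₂ M₁ Θ A21 ∧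
  StepCond M₁ M₂ k A12 A21 ∧ StepCond M₂ M₁ k A21 A12 ∧
  (if boxOne then Box1Cond M₁ M₂ k A12 ∧ Box1Cond M₂ M₁ k A21
   else Box2Cond M₁ M₂ k A12 ∧ Box2Cond M₂ M₁ k A21) ∧
  Diam2aCond M₁ M₂ k A12 B12 ∧ Diam2aCond M₂ M₁ k A21 B21 ∧
  Diam2bCond M₁ M₂ k B12 A12 ∧ Diam2bCond M₂ M₁ k B21 A21

/-- φ(x) is invariant with respect to (i,1)-modal k-asimulations. -/
def KInvariantD1 (boxOne : Bool) (x : ℕ) (φ : FOForm) (k : ℕ) : Prop :=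
  ∀ Θ : Set ℕ, (φ.predLetters : Set ℕ) ⊆ Θ →
  ∀ (M₁ M₂ : Model) (t : M₁.U) (u : M₂.U)
    (A12 : List M₁.U → List M₂.U → Prop) (A21 : List M₂.U → List M₁.U → Prop),
    IsKAsimD1 boxOne Θ M₁ M₂ t u k A12 A21 →
    ∀ (a : M₁.U) (b : M₂.U), A12 [a] [b] → SatAt M₁ a x φ → SatAt M₂ b x φ

/-- φ(x) is invariant with respect to (i,2)-modal k-asimulations. -/
def KInvariantD2 (boxOne : Bool) (x : ℕ) (φ : FOForm) (k : ℕ) : Prop :=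
  ∀ Θ : Set ℕ, (φ.predLetters : Set ℕ) ⊆ Θ →
  ∀ (M₁ M₂ : Model) (t : M₁.U) (u : M₂.U)
    (A12 : List M₁.U → List M₂.U → Prop) (A21 : List M₂.U → List M₁.U → Prop)
    (B12 : List M₁.U → List M₂.U → Prop) (B21 : List M₂.U → List M₁.U → Prop),
    IsKAsimD2 boxOne Θ M₁ M₂ t u k A12 A21 B12 B21 →
    ∀ (a : M₁.U) (b : M₂.U), A12 [a] [b] → SatAt M₁ a x φ → SatAt M₂ b x φ

/-! ### Conditions for asimulations *simpliciter* (relations between elements). -/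

section ElemConds

variable (N P : Model)

/-- (base). -/
def BaseCondE (Θ : Set ℕ) (A : N.U → P.U → Prop) : Prop :=
  ∀ (a : N.U) (b : P.U), A a b → ∀ n ∈ Θ, N.pred n a → P.pred n b

/-- (step). -/
def StepCondE (A : N.U → P.U → Prop) (Arev : P.U → N.U → Prop) : Prop :=
  ∀ (a : N.U) (b d : P.U), A a b → P.rel b d →
    ∃ c : N.U, N.rel a c ∧ A c d ∧ Arev d c

/-- (box-1). -/
def Box1CondE (A : N.U → P.U → Prop) : Prop :=
  ∀ (a : N.U) (b d : P.U), A a b → P.relBox b d →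
    ∃ c : N.U, N.relBox a c ∧ A c d

/-- (box-2). -/
def Box2CondE (A : N.U → P.U → Prop) : Prop :=
  ∀ (a : N.U) (b d f : P.U), A a b → P.rel b d → P.relBox d f →
    ∃ c e : N.U, N.rel a c ∧ N.relBox c e ∧ A e f

/-- (diam-1). -/
def Diam1CondE (A : N.U → P.U → Prop) : Prop :=
  ∀ (a c : N.U) (b : P.U), A a b → N.relDiam a c →
    ∃ d : P.U, P.relDiam b d ∧ A c d

/-- (diam-2(1)). -/
def Diam2aCondE (A B : N.U → P.U → Prop) : Prop :=
  ∀ (a : N.U) (b d : P.U), A a b → P.rel b d →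
    ∃ c : N.U, N.rel a c ∧ B c d

/-- (diam-2(2)). -/
def Diam2bCondE (B A : N.U → P.U → Prop) : Prop :=
  ∀ (a c : N.U) (b : P.U), B a b → N.relDiam a c →
    ∃ d : P.U, P.relDiam b d ∧ A c d

end ElemConds

/-- An (i,1)-modal ⟨(M₁,t),(M₂,u)⟩-asimulation (j = 1). -/
def IsAsimD1 (boxOne : Bool) (Θ : Set ℕ) (M₁ M₂ : Model) (t : M₁.U) (u : M₂.U)
    (A12 : M₁.U → M₂.U → Prop) (A21 : M₂.U → M₁.U → Prop) : Prop :=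
  A12 t u ∧
  BaseCondE M₁ M₂ Θ A12 ∧ BaseCondE M₂ M₁ Θ A21 ∧
  StepCondE M₁ M₂ A12 A21 ∧ StepCondE M₂ M₁ A21 A12 ∧
  (if boxOne then Box1CondE M₁ M₂ A12 ∧ Box1CondE M₂ M₁ A21
   else Box2CondE M₁ M₂ A12 ∧ Box2CondE M₂ M₁ A21) ∧
  Diam1CondE M₁ M₂ A12 ∧ Diam1CondE M₂ M₁ A21

/-- An (i,2)-modal ⟨(M₁,t),(M₂,u)⟩-asimulation (j = 2). -/
def IsAsimD2 (boxOne : Bool) (Θ : Set ℕ) (M₁ M₂ : Model) (t : M₁.U) (u : M₂.U)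
    (A12 : M₁.U → M₂.U → Prop) (A21 : M₂.U → M₁.U → Prop)
    (B12 : M₁.U → M₂.U → Prop) (B21 : M₂.U → M₁.U → Prop) : Prop :=
  A12 t u ∧
  BaseCondE M₁ M₂ Θ A12 ∧ BaseCondE M₂ M₁ Θ A21 ∧
  StepCondE M₁ M₂ A12 A21 ∧ StepCondE M₂ M₁ A21 A12 ∧
  (if boxOne then Box1CondE M₁ M₂ A12 ∧ Box1CondE M₂ M₁ A21
   else Box2CondE M₁ M₂ A12 ∧ Box2CondE M₂ M₁ A21) ∧
  Diam2aCondE M₁ M₂ A12 B12 ∧ Diam2aCondE M₂ M₁ A21 B21 ∧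
  Diam2bCondE M₁ M₂ B12 A12 ∧ Diam2bCondE M₂ M₁ B21 A21

/-- φ(x) is invariant with respect to (i,1)-modal asimulations. -/
def InvariantD1 (boxOne : Bool) (x : ℕ) (φ : FOForm) : Prop :=
  ∀ Θ : Set ℕ, (φ.predLetters : Set ℕ) ⊆ Θ →
  ∀ (M₁ M₂ : Model) (t : M₁.U) (u : M₂.U)
    (A12 : M₁.U → M₂.U → Prop) (A21 : M₂.U → M₁.U → Prop),
    IsAsimD1 boxOne Θ M₁ M₂ t u A12 A21 →
    ∀ (a : M₁.U) (b : M₂.U), A12 a b → SatAt M₁ a x φ → SatAt M₂ b x φ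

/-- φ(x) is invariant with respect to (i,2)-modal asimulations. -/
def InvariantD2 (boxOne : Bool) (x : ℕ) (φ : FOForm) : Prop :=
  ∀ Θ : Set ℕ, (φ.predLetters : Set ℕ) ⊆ Θ →
  ∀ (M₁ M₂ : Model) (t : M₁.U) (u : M₂.U)
    (A12 : M₁.U → M₂.U → Prop) (A21 : M₂.U → M₁.U → Prop)
    (B12 : M₁.U → M₂.U → Prop) (B21 : M₂.U → M₁.U → Prop),
    IsAsimD2 boxOne Θ M₁ M₂ t u A12 A21 B12 B21 →
    ∀ (a : M₁.U) (b : M₂.U), A12 a b → SatAt M₁ a x φ → SatAt M₂ b x φ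

/-! ### Types, complete conjunctions, ω-saturation. -/

/-- `int(φ,x,l)`: the set of (2,2)-standard x-translations of modal
intuitionistic formulas which are (Σ_φ,x,l)-formulas. -/
def intSet (φ : FOForm) (x l : ℕ) : Set FOForm :=
  {ψ | (∃ I : MForm, ψ = ST false false I x) ∧
    ψ.predLetters ⊆ φ.predLetters ∧ ψ.freeVars ⊆ {x} ∧ ψ.degree ≤ l}

/-- `tp_l(φ(x),M,a)`. -/
def tpSet (φ : FOForm) (x l : ℕ) (M : Model) (a : M.U) : Set FOForm :=
  {ψ | ψ ∈ intSet φ x l ∧ SatAt M a x ψ}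

/-- Conjunction of a nonempty list of formulas. -/
def listConj : FOForm → List FOForm → FOForm
  | ψ, [] => ψ
  | ψ, χ :: L => FOForm.conj ψ (listConj χ L)

/-- Ψ(x) is a complete (φ,x,k)-conjunction. -/
def IsCompleteConj (φ : FOForm) (x k : ℕ) (Ψ : FOForm) : Prop :=
  (∃ (ψ₀ : FOForm) (L : List FOForm), ψ₀ ∈ intSet φ x k ∧
    (∀ χ ∈ L, χ ∈ intSet φ x k) ∧ Ψ = listConj ψ₀ L) ∧
  ∃ (M : Model) (a : M.U), SatAt M a x (FOForm.conj Ψ φ) ∧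
    ∀ ψ ∈ tpSet φ x k M a, Entails Ψ ψ

/-- `int_x(Θ)` for the (i,j)-standard translation. -/
def intX (Θ : Set ℕ) (boxOne diamOne : Bool) (x : ℕ) : Set FOForm :=
  {ψ | (∃ I : MForm, ψ = ST boxOne diamOne I x) ∧ (ψ.predLetters : Set ℕ) ⊆ Θ}

/-- `tp_x(M,t)` for the (i,j)-standard translation. -/
def tpX (Θ : Set ℕ) (boxOne diamOne : Bool) (x : ℕ) (M : Model) (t : M.U) : Set FOForm :=
  {ψ | ψ ∈ intX Θ boxOne diamOne x ∧ SatAt M t x ψ}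

/-- `imp_x(M,t) = ⋂ { t̄p_x(M,u) : t R_◇ u }` (for the (2,2)-translation). -/
def impX (Θ : Set ℕ) (x : ℕ) (M : Model) (t : M.U) : Set FOForm :=
  {ψ | ψ ∈ intX Θ false false x ∧ ∀ u : M.U, M.relDiam t u → ¬ SatAt M u x ψ}

/-- ω-saturation: for every finite tuple of parameters (the first `n` values of
an assignment `α`) and every set `Γ` of formulas with finitely many free
variables beyond the parameters, if `Γ` is consistent with the first-order
theory of `[M,ā]` (i.e. satisfiable together with it in some model), then `Γ`
is realized in `[M,ā]`. -/
def OmegaSaturated (M : Model) : Prop :=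
  ∀ (n : ℕ) (α : ℕ → M.U) (Γ : Set FOForm),
    (∃ k : ℕ, ∀ γ ∈ Γ, γ.freeVars ⊆ Finset.range (n + k)) →
    (∃ (N : Model) (β : ℕ → N.U),
      (∀ ψ : FOForm, ψ.freeVars ⊆ Finset.range n → Sat M ψ α → Sat N ψ β) ∧
      ∀ γ ∈ Γ, Sat N γ β) →
    ∃ α' : ℕ → M.U, (∀ i < n, α' i = α i) ∧ ∀ γ ∈ Γ, Sat M γ α'

/-! ### Relativization to a class κ of models. -/

/-- κ(Θ) is first-order axiomatizable for every finite Θ (with R ∈ Θ): for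
every finite set `S` of unary predicate letters there is a set of Θ-sentences
axiomatizing membership in κ. -/
def FinAxiomatizable (κ : Set Model) : Prop :=
  ∀ S : Finset ℕ, ∃ Ax : Set FOForm,
    (∀ ψ ∈ Ax, ψ.freeVars = ∅ ∧ (ψ.predLetters : Set ℕ) ⊆ (S : Set ℕ)) ∧
    ∀ M : Model, M ∈ κ ↔ ∀ ψ ∈ Ax, ∀ α : ℕ → M.U, Sat M ψ α

/-- φ κ-follows from ψ: {ψ, ¬φ} is not κ-satisfiable. -/
def KappaFollows (κ : Set Model) (ψ φ : FOForm) : Prop :=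
  ¬ ∃ M : Model, M ∈ κ ∧ ∃ α : ℕ → M.U, Sat M ψ α ∧ ¬ Sat M φ α

/-- κ-equivalence of formulas. -/
def KappaEquiv (κ : Set Model) (φ ψ : FOForm) : Prop :=
  KappaFollows κ φ ψ ∧ KappaFollows κ ψ φ

/-- φ(x) is κ-invariant with respect to (i,1)-modal asimulations. -/
def KappaInvariantD1 (κ : Set Model) (boxOne : Bool) (x : ℕ) (φ : FOForm) : Prop :=
  ∀ Θ : Set ℕ, (φ.predLetters : Set ℕ) ⊆ Θ →
  ∀ (M₁ M₂ : Model), M₁ ∈ κ → M₂ ∈ κ →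
  ∀ (t : M₁.U) (u : M₂.U)
    (A12 : M₁.U → M₂.U → Prop) (A21 : M₂.U → M₁.U → Prop),
    IsAsimD1 boxOne Θ M₁ M₂ t u A12 A21 →
    ∀ (a : M₁.U) (b : M₂.U), A12 a b → SatAt M₁ a x φ → SatAt M₂ b x φ

/-- φ(x) is κ-invariant with respect to (i,2)-modal asimulations. -/
def KappaInvariantD2 (κ : Set Model) (boxOne : Bool) (x : ℕ) (φ : FOForm) : Prop :=
  ∀ Θ : Set ℕ, (φ.predLetters : Set ℕ) ⊆ Θ →
  ∀ (M₁ M₂ : Model), M₁ ∈ κ → M₂ ∈ κ →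
  ∀ (t : M₁.U) (u : M₂.U)
    (A12 : M₁.U → M₂.U → Prop) (A21 : M₂.U → M₁.U → Prop)
    (B12 : M₁.U → M₂.U → Prop) (B21 : M₂.U → M₁.U → Prop),
    IsAsimD2 boxOne Θ M₁ M₂ t u A12 A21 B12 B21 →
    ∀ (a : M₁.U) (b : M₂.U), A12 a b → SatAt M₁ a x φ → SatAt M₂ b x φ

/-- φ(x) is κ-invariant with respect to (i,j)-modal asimulations
(`diamOne = true` means j = 1). -/
def KappaInvariant (κ : Set Model) (boxOne diamOne : Bool) (x : ℕ) (φ : FOForm) : Prop :=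
  if diamOne then KappaInvariantD1 κ boxOne x φ else KappaInvariantD2 κ boxOne x φ


/-! ### Proof of the theorem -/

/-- Direct modal semantics matching `ST false true`. -/
def MSat (M : Model) : MForm → M.U → Prop
  | .bot, _ => False
  | .prop n, a => M.pred n a
  | .conj I J, a => MSat M I a ∧ MSat M J a
  | .disj I J, a => MSat M I a ∨ MSat M J a
  | .impl I J, a => ∀ c, M.rel a c → MSat M I c → MSat M J c
  | .box I, a => ∀ c, M.rel a c → ∀ e, M.relBox c e → MSat M I e
  | .diam I, a => ∃ c, M.relDiam a c ∧ MSat M I c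

theorem sat_ST (M : Model) (I : MForm) :
    ∀ (x : ℕ) (α : ℕ → M.U), Sat M (ST false true I x) α ↔ MSat M I (α x) := by
  induction I with
  | bot => intro x α; simp [ST, Sat, MSat]
  | prop n => intro x α; simp [ST, Sat, MSat]
  | conj I J hI hJ => intro x α; simp [ST, Sat, MSat, hI, hJ]
  | disj I J hI hJ => intro x α; simp [ST, Sat, MSat, hI, hJ]
  | impl I J hI hJ => intro x α; simp [ST, Sat, MSat, hI, hJ, Model.relOf]
  | box I hI => intro x α; simp [ST, Sat, MSat, hI, Model.relOf]
  | diam I hI => intro x α; simp [ST, Sat, MSat, hI, Model.relOf]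

theorem sat_congr (M : Model) (φ : FOForm) :
    ∀ (α β : ℕ → M.U), (∀ v ∈ φ.freeVars, α v = β v) → (Sat M φ α ↔ Sat M φ β) := by
  induction φ with
  | falsum => intro α β _; simp [Sat]
  | pred n v => intro α β h; simp [FOForm.freeVars] at h; simp [Sat, h]
  | rel s v w => intro α β h; simp [FOForm.freeVars] at h; simp [Sat, h]
  | conj f g hf hg =>
    intro α β h; simp only [FOForm.freeVars, Finset.mem_union] at h
    simp only [Sat, hf α β (fun v hv => h v (Or.inl hv)), hg α β (fun v hv => h v (Or.inr hv))]
  | disj f g hf hg =>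
    intro α β h; simp only [FOForm.freeVars, Finset.mem_union] at h
    simp only [Sat, hf α β (fun v hv => h v (Or.inl hv)), hg α β (fun v hv => h v (Or.inr hv))]
  | impl f g hf hg =>
    intro α β h; simp only [FOForm.freeVars, Finset.mem_union] at h
    simp only [Sat, hf α β (fun v hv => h v (Or.inl hv)), hg α β (fun v hv => h v (Or.inr hv))]
  | all v f hf =>
    intro α β h
    simp only [FOForm.freeVars, Finset.mem_sdiff, Finset.mem_singleton] at h
    simp only [Sat]
    refine forall_congr' fun u => hf _ _ fun w hw => ?_
    by_cases e : w = v
    · subst e; simp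
    · simp [Function.update_of_ne e, h w ⟨hw, e⟩]
  | ex v f hf =>
    intro α β h
    simp only [FOForm.freeVars, Finset.mem_sdiff, Finset.mem_singleton] at h
    simp only [Sat]
    refine exists_congr fun u => hf _ _ fun w hw => ?_
    by_cases e : w = v
    · subst e; simp
    · simp [Function.update_of_ne e, h w ⟨hw, e⟩]

theorem satAt_iff (M : Model) (x : ℕ) (φ : FOForm) (hfv : φ.freeVars ⊆ {x}) (α : ℕ → M.U) :
    SatAt M (α x) x φ ↔ Sat M φ α := by
  refine ⟨fun h => h α rfl, fun h β hβ => (sat_congr M φ β α fun v hv => ?_).2 h⟩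
  have := hfv hv
  simp at this
  subst this; exact hβ

/-- The model with all letters outside `Θ` made false. -/
def cut (Θ : Set ℕ) (M : Model) : Model :=
  { M with pred := fun n a => n ∈ Θ ∧ M.pred n a }

theorem sat_cut (Θ : Set ℕ) (M : Model) (φ : FOForm) :
    (φ.predLetters : Set ℕ) ⊆ Θ → ∀ (α : ℕ → M.U), (Sat (cut Θ M) φ α ↔ Sat M φ α) := by
  induction φ with
  | falsum => intro _ α; exact Iff.rfl
  | pred n v =>
    intro h α; simp [FOForm.predLetters] at h
    exact ⟨fun h => h.2, fun h' => ⟨h, h'⟩⟩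
  | rel s v w => intro h α; cases s <;> exact Iff.rfl
  | conj f g hf hg =>
    intro h α; simp only [FOForm.predLetters, Finset.coe_union, Set.union_subset_iff] at h
    exact and_congr (hf h.1 α) (hg h.2 α)
  | disj f g hf hg =>
    intro h α; simp only [FOForm.predLetters, Finset.coe_union, Set.union_subset_iff] at h
    exact or_congr (hf h.1 α) (hg h.2 α)
  | impl f g hf hg =>
    intro h α; simp only [FOForm.predLetters, Finset.coe_union, Set.union_subset_iff] at h
    exact imp_congr (hf h.1 α) (hg h.2 α)
  | all v f hf => intro h α; exact forall_congr' fun u => hf h _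
  | ex v f hf => intro h α; exact exists_congr fun u => hf h _

/-- Modal degree. -/
def mdeg : MForm → ℕ
  | .bot => 0
  | .prop _ => 0
  | .conj I J => max (mdeg I) (mdeg J)
  | .disj I J => max (mdeg I) (mdeg J)
  | .impl I J => max (mdeg I) (mdeg J) + 1
  | .box I => mdeg I + 2
  | .diam I => mdeg I + 1

/-- Conditions of one direction of a (2,1)-modal asimulation. -/
structure Half (k : ℕ) (Θ : Set ℕ) (N P : Model) (A : List N.U → List P.U → Prop)
    (A' : List P.U → List N.U → Prop) : Prop where
  base : BaseCond N P Θ A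
  step : StepCond N P k A A'
  box : Box2Cond N P k A
  diam : Diam1Cond N P k A

theorem preserve (k : ℕ) (Θ : Set ℕ) (I : MForm) :
    ∀ (N P : Model) (A : List N.U → List P.U → Prop) (A' : List P.U → List N.U → Prop),
      Half k Θ N P A A' → Half k Θ P N A' A →
      ∀ (as : List N.U) (bs : List P.U) (a : N.U) (b : P.U), as.length + mdeg I ≤ k → bs.length + mdeg I ≤ k →
        A (as ++ [a]) (bs ++ [b]) → MSat (cut Θ N) I a → MSat (cut Θ P) I b := by
  induction I with
  | bot => intro N P A A' _ _ as bs a b _ _ _ h; exact h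
  | prop n =>
    intro N P A A' h _ as bs a b _ _ hA hn
    exact ⟨hn.1, h.base as bs a b hA n hn.1 hn.2⟩
  | conj I J hI hJ =>
    intro N P A A' h h' as bs a b la lb hA hs
    simp only [mdeg] at la lb
    exact ⟨hI N P A A' h h' as bs a b (by omega) (by omega) hA hs.1,
      hJ N P A A' h h' as bs a b (by omega) (by omega) hA hs.2⟩
  | disj I J hI hJ =>
    intro N P A A' h h' as bs a b la lb hA hs
    simp only [mdeg] at la lb
    exact hs.imp (hI N P A A' h h' as bs a b (by omega) (by omega) hA)
      (hJ N P A A' h h' as bs a b (by omega) (by omega) hA)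
  | impl I J hI hJ =>
    intro N P A A' h h' as bs a b la lb hA hs d hd hId
    change P.U at d
    simp only [mdeg] at la lb
    obtain ⟨c, hc, h1, h2⟩ := h.step as bs a b d hA hd (by omega)
    have e1 : as ++ [a, c] = (as ++ [a]) ++ [c] := by simp
    have e2 : bs ++ [b, d] = (bs ++ [b]) ++ [d] := by simp
    rw [e1, e2] at h1 h2
    refine hJ N P A A' h h' _ _ c d (by simp; omega) (by simp; omega) h1 (hs c hc ?_)
    exact hI P N A' A h' h _ _ d c (by simp; omega) (by simp; omega) h2 hId
  | box I hI =>
    intro N P A A' h h' as bs a b la lb hA hs d hd f hf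
    change P.U at d f
    simp only [mdeg] at la lb
    obtain ⟨c, e, hc, he, h1⟩ := h.box as bs a b d f hA hd hf (by omega)
    have e1 : as ++ [a, c, e] = (as ++ [a, c]) ++ [e] := by simp
    have e2 : bs ++ [b, d, f] = (bs ++ [b, d]) ++ [f] := by simp
    rw [e1, e2] at h1
    exact hI N P A A' h h' _ _ e f (by simp; omega) (by simp; omega) h1 (hs c hc e he)
  | diam I hI =>
    intro N P A A' h h' as bs a b la lb hA hs
    simp only [mdeg] at la lb
    obtain ⟨c, hc, hIc⟩ := hs
    change N.U at c
    obtain ⟨d, hd, h1⟩ := h.diam as bs a c b hA hc (by omega)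
    have e1 : as ++ [a, c] = (as ++ [a]) ++ [c] := by simp
    have e2 : bs ++ [b, d] = (bs ++ [b]) ++ [d] := by simp
    rw [e1, e2] at h1
    exact ⟨d, hd, hI N P A A' h h' _ _ c d (by simp; omega) (by simp; omega) h1 hIc⟩

/-- Finite conjunction. -/
def bigAnd : List MForm → MForm
  | [] => .impl .bot .bot
  | I :: L => .conj I (bigAnd L)

/-- Finite disjunction. -/
def bigOr : List MForm → MForm
  | [] => .bot
  | I :: L => .disj I (bigOr L)

theorem msat_bigAnd (M : Model) (L : List MForm) (a : M.U) :
    MSat M (bigAnd L) a ↔ ∀ I ∈ L, MSat M I a := by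
  induction L with
  | nil => simp [bigAnd, MSat]
  | cons I L ih => simp [bigAnd, MSat, ih]

theorem msat_bigOr (M : Model) (L : List MForm) (a : M.U) :
    MSat M (bigOr L) a ↔ ∃ I ∈ L, MSat M I a := by
  induction L with
  | nil => simp [bigOr, MSat]
  | cons I L ih => simp [bigOr, MSat, ih]

/-- Finite lists of formulas determining the levels of asimilarity. -/
def lev (S : List ℕ) : ℕ → List MForm
  | 0 => S.map MForm.prop
  | n + 1 => lev S n ++
      ((lev S n).sublists.flatMap fun X => (lev S n).sublists.map fun Y =>
        MForm.impl (bigAnd X) (bigOr Y)) ++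
      ((lev S n).sublists.map fun Y => MForm.box (bigOr Y)) ++
      ((lev S n).sublists.map fun X => MForm.diam (bigAnd X))

theorem lev_mono (S : List ℕ) {m n : ℕ} (h : m ≤ n) : ∀ I ∈ lev S m, I ∈ lev S n := by
  induction h with
  | refl => exact fun _ h => h
  | step _ ih => intro I hI; simp only [lev, List.mem_append]; exact Or.inl (Or.inl (Or.inl (ih I hI)))

/-- Preservation of the formulas of level `n`. -/
def Pres (S : List ℕ) (n : ℕ) (N P : Model) (a : N.U) (b : P.U) : Prop :=
  ∀ I ∈ lev S n, MSat N I a → MSat P I b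

open Classical in
/-- The formulas of a list true at a point. -/
noncomputable def tr (M : Model) (a : M.U) (L : List MForm) : List MForm :=
  L.filter fun I => decide (MSat M I a)

open Classical in
/-- The formulas of a list false at a point. -/
noncomputable def fl (M : Model) (a : M.U) (L : List MForm) : List MForm :=
  L.filter fun I => decide (¬ MSat M I a)

theorem mem_tr (M : Model) (a : M.U) (L : List MForm) (I : MForm) :
    I ∈ tr M a L ↔ I ∈ L ∧ MSat M I a := by simp [tr]

theorem mem_fl (M : Model) (a : M.U) (L : List MForm) (I : MForm) :
    I ∈ fl M a L ↔ I ∈ L ∧ ¬ MSat M I a := by simp [fl]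

theorem tr_sub (M : Model) (a : M.U) (L : List MForm) : tr M a L ∈ L.sublists := by
  rw [List.mem_sublists]; exact List.filter_sublist

theorem fl_sub (M : Model) (a : M.U) (L : List MForm) : fl M a L ∈ L.sublists := by
  rw [List.mem_sublists]; exact List.filter_sublist

theorem pres_step (S : List ℕ) (n : ℕ) (N P : Model) (a : N.U) (b d : P.U)
    (h : Pres S (n + 1) N P a b) (hd : P.rel b d) :
    ∃ c, N.rel a c ∧ Pres S n N P c d ∧ Pres S n P N d c := by
  by_contra hc
  have hm : MForm.impl (bigAnd (tr P d (lev S n))) (bigOr (fl P d (lev S n))) ∈ lev S (n + 1) := by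
    simp only [lev, List.mem_append, List.mem_flatMap, List.mem_map]
    exact Or.inl (Or.inl (Or.inr ⟨_, tr_sub P d _, _, fl_sub P d _, rfl⟩))
  have hb := h _ hm (by
    intro c hac hX
    rw [msat_bigAnd] at hX
    rw [msat_bigOr]
    by_contra hY
    refine hc ⟨c, hac, fun I hI hs => ?_, fun I hI hs => hX I ((mem_tr ..).2 ⟨hI, hs⟩)⟩
    by_contra hn
    exact hY ⟨I, (mem_fl ..).2 ⟨hI, hn⟩, hs⟩)
  have := hb d hd ((msat_bigAnd ..).2 fun I hI => ((mem_tr ..).1 hI).2)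
  obtain ⟨I, hI, hs⟩ := (msat_bigOr ..).1 this
  exact ((mem_fl ..).1 hI).2 hs

theorem pres_box (S : List ℕ) (n : ℕ) (N P : Model) (a : N.U) (b d f : P.U)
    (h : Pres S (n + 1) N P a b) (hd : P.rel b d) (hf : P.relBox d f) :
    ∃ c e, N.rel a c ∧ N.relBox c e ∧ Pres S n N P e f := by
  by_contra hc
  have hm : MForm.box (bigOr (fl P f (lev S n))) ∈ lev S (n + 1) := by
    simp only [lev, List.mem_append, List.mem_map]
    exact Or.inl (Or.inr ⟨_, fl_sub P f _, rfl⟩)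
  have hb := h _ hm (by
    intro c hac e he
    rw [msat_bigOr]
    by_contra hY
    refine hc ⟨c, e, hac, he, fun I hI hs => ?_⟩
    by_contra hn
    exact hY ⟨I, (mem_fl ..).2 ⟨hI, hn⟩, hs⟩)
  obtain ⟨I, hI, hs⟩ := (msat_bigOr ..).1 (hb d hd f hf)
  exact ((mem_fl ..).1 hI).2 hs

theorem pres_diam (S : List ℕ) (n : ℕ) (N P : Model) (a c : N.U) (b : P.U)
    (h : Pres S (n + 1) N P a b) (hc : N.relDiam a c) :
    ∃ d, P.relDiam b d ∧ Pres S n N P c d := by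
  have hm : MForm.diam (bigAnd (tr N c (lev S n))) ∈ lev S (n + 1) := by
    simp only [lev, List.mem_append, List.mem_map]
    exact Or.inr ⟨_, tr_sub N c _, rfl⟩
  obtain ⟨d, hd, hs⟩ := h _ hm ⟨c, hc, (msat_bigAnd ..).2 fun I hI => ((mem_tr ..).1 hI).2⟩
  exact ⟨d, hd, fun I hI ht => (msat_bigAnd ..).1 hs I ((mem_tr ..).2 ⟨hI, ht⟩)⟩

/-- The canonical k-asimulation. -/
def can (S : List ℕ) (k : ℕ) (N P : Model) (as : List N.U) (bs : List P.U) : Prop :=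
  ∃ as' a bs' b, as = as' ++ [a] ∧ bs = bs' ++ [b] ∧ as'.length = bs'.length ∧
    Pres S (k - as'.length) N P a b

theorem can_iff (S : List ℕ) (k : ℕ) (N P : Model) (as : List N.U) (bs : List P.U) (a : N.U)
    (b : P.U) : can S k N P (as ++ [a]) (bs ++ [b]) ↔
      as.length = bs.length ∧ Pres S (k - as.length) N P a b := by
  constructor
  · rintro ⟨as', a', bs', b', h1, h2, h3, h4⟩
    obtain ⟨rfl, h1⟩ := List.append_inj' h1 rfl
    obtain ⟨rfl, h2⟩ := List.append_inj' h2 rfl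
    simp at h1 h2
    subst h1 h2
    exact ⟨h3, h4⟩
  · rintro ⟨h1, h2⟩
    exact ⟨as, a, bs, b, rfl, rfl, h1, h2⟩

theorem can_iff2 (S : List ℕ) (k : ℕ) (N P : Model) (as : List N.U) (bs : List P.U) (a c : N.U)
    (b d : P.U) : can S k N P (as ++ [a, c]) (bs ++ [b, d]) ↔
      as.length = bs.length ∧ Pres S (k - (as.length + 1)) N P c d := by
  have := can_iff S k N P (as ++ [a]) (bs ++ [b]) c d
  simpa using this

theorem can_iff3 (S : List ℕ) (k : ℕ) (N P : Model) (as : List N.U) (bs : List P.U) (a c e : N.U)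
    (b d f : P.U) : can S k N P (as ++ [a, c, e]) (bs ++ [b, d, f]) ↔
      as.length = bs.length ∧ Pres S (k - (as.length + 2)) N P e f := by
  have := can_iff S k N P (as ++ [a, c]) (bs ++ [b, d]) e f
  simpa using this

theorem can_type (S : List ℕ) (k : ℕ) (N P : Model) : TypeCond N P (can S k N P) := by
  rintro as bs ⟨as', a, bs', b, rfl, rfl, h, _⟩
  simp [h]

theorem can_half (S : List ℕ) (k : ℕ) (N P : Model) :
    Half k {n | n ∈ S} N P (can S k N P) (can S k P N) where
  base := by
    intro as bs a b h n hn hp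
    have h2 := ((can_iff ..).1 h).2
    exact h2 (.prop n) (lev_mono S (Nat.zero_le _) _ (List.mem_map.2 ⟨n, hn, rfl⟩)) hp
  step := by
    intro as bs a b d h hd hk
    obtain ⟨hl, h⟩ := (can_iff ..).1 h
    have e : k - as.length = (k - (as.length + 1)) + 1 := by omega
    rw [e] at h
    obtain ⟨c, hc, h1, h2⟩ := pres_step S _ N P a b d h hd
    exact ⟨c, hc, (can_iff2 ..).2 ⟨hl, h1⟩, (can_iff2 ..).2 ⟨hl.symm, hl ▸ h2⟩⟩
  box := by
    intro as bs a b d f h hd hf hk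
    obtain ⟨hl, h⟩ := (can_iff ..).1 h
    have e : k - as.length = (k - (as.length + 1)) + 1 := by omega
    rw [e] at h
    obtain ⟨c, e, hc, he, h1⟩ := pres_box S _ N P a b d f h hd hf
    exact ⟨c, e, hc, he, (can_iff3 ..).2 ⟨hl, fun I hI => h1 I (lev_mono S (by omega) I hI)⟩⟩
  diam := by
    intro as bs a c b h hc hk
    obtain ⟨hl, h⟩ := (can_iff ..).1 h
    have e : k - as.length = (k - (as.length + 1)) + 1 := by omega
    rw [e] at h
    obtain ⟨d, hd, h1⟩ := pres_diam S _ N P a c b h hc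
    exact ⟨d, hd, (can_iff2 ..).2 ⟨hl, h1⟩⟩

theorem forward (x : ℕ) (φ : FOForm) (hfv : φ.freeVars ⊆ {x}) (I : MForm)
    (hI : Equiv φ (ST false true I x)) : KInvariantD1 false x φ (mdeg I) := by
  intro Θ hΘ M₁ M₂ t u A12 A21 hA a b hab ha
  obtain ⟨_, _, _, b1, b2, s1, s2, bx, d1, d2⟩ := hA
  simp only [Bool.false_eq_true, if_false] at bx
  have key := preserve (mdeg I) Θ I M₁ M₂ A12 A21 ⟨b1, s1, bx.1, d1⟩ ⟨b2, s2, bx.2, d2⟩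
    [] [] a b (by simp) (by simp) hab
  have e1 : ∀ (M : Model) (c : M.U), SatAt M c x φ ↔ MSat (cut Θ M) I c := by
    intro M c
    have h1 := satAt_iff M x φ hfv (fun _ => c)
    have h2 := sat_cut Θ M φ hΘ (fun _ => c)
    have h3 := hI (cut Θ M) (fun _ => c)
    have h4 := sat_ST (cut Θ M) I x (fun _ => c)
    exact h1.trans (h2.symm.trans (h3.trans h4))
  exact (e1 M₂ b).2 (key ((e1 M₁ a).1 ha))

open Classical in
theorem backward (x : ℕ) (φ : FOForm) (hfv : φ.freeVars ⊆ {x}) (k : ℕ)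
    (hk : KInvariantD1 false x φ k) : ∃ I : MForm, Equiv φ (ST false true I x) := by
  let S := φ.predLetters.toList
  refine ⟨bigOr (((lev S k).sublists.filter fun X => decide (∀ (M : Model) (a : M.U),
    MSat M (bigAnd X) a → SatAt M a x φ)).map bigAnd), fun M α => ?_⟩
  rw [sat_ST, msat_bigOr]
  constructor
  · intro h
    have h := (satAt_iff M x φ hfv α).2 h
    refine ⟨_, List.mem_map.2 ⟨tr M (α x) (lev S k), ?_, rfl⟩,
      (msat_bigAnd ..).2 fun I hI => ((mem_tr ..).1 hI).2⟩
    rw [List.mem_filter]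
    refine ⟨tr_sub .., decide_eq_true ?_⟩
    intro P b hb
    have hp : Pres S k M P (α x) b := fun I hI hs =>
      (msat_bigAnd ..).1 hb I ((mem_tr ..).2 ⟨hI, hs⟩)
    have hc : can S k M P [α x] [b] := (can_iff S k M P [] [] (α x) b).2 ⟨rfl, hp⟩
    have g1 := can_half S k M P
    have g2 := can_half S k P M
    refine hk {n | n ∈ S} (fun n hn => by simpa [S] using hn) M P (α x) b (can S k M P)
      (can S k P M) ?_ (α x) b hc h
    refine ⟨can_type _ _ _ _, can_type _ _ _ _, hc, g1.base, g2.base, g1.step, g2.step, ?_, g1.diam, g2.diam⟩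
    simp only [Bool.false_eq_true, if_false]
    exact ⟨g1.box, g2.box⟩
  · rintro ⟨J, hJ, hs⟩
    obtain ⟨X, hX, rfl⟩ := List.mem_map.1 hJ
    rw [List.mem_filter] at hX
    exact of_decide_eq_true hX.2 M (α x) hs α rfl

/-- **Theorem 1, case (i,j) = (2,1).**  φ(x) is logically equivalent to the
(2,1)-standard x-translation of a modal intuitionistic formula iff there is a
k ∈ ℕ such that φ(x) is invariant with respect to (2,1)-modal k-asimulations. -/
theorem statement_1 (x : ℕ) (φ : FOForm) (hfv : φ.freeVars ⊆ {x}) :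
    (∃ I : MForm, Equiv φ (ST false true I x)) ↔
    (∃ k : ℕ, KInvariantD1 false x φ k) := by
  exact ⟨fun ⟨I, hI⟩ => ⟨mdeg I, forward x φ hfv I hI⟩, fun ⟨k, hk⟩ => backward x φ hfv k hk⟩

end ModalIntAsim
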